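/- Let a ≥ 1 and for i = 1, …, k set α_i = i. For every ρ > 0 and each i there exists a positive, smooth, strictly convex, strictly decreasing function h_i : ℝ → ℝ with h_i(r) = e^{−α_i r} for r ≥ ρ and h_i(r) = e^{−a r} for r ≤ −ρ, where a = k. Moreover h_i′ < 0 < h_i″ everywhere and the ratios h_i′/h_i and h_i″/h_i are bounded away from 0 and ∞. -/

import Mathlib

/-!
Write `h = exp ∘ g`. Then `h' / h = g'` and `h'' / h = g' ^ 2 + g''`, so it suffices that `g` be
smooth and convex with `g''` bounded and with negative slope rising from `-a` to `-α`; this is where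
`α ≤ a` enters. Prescribing the slope as `-a + (a - α) * σ` for a smooth step `σ`, the primitive `g`
is `-a * r` on the left and affine of slope `-α` on the right. Its constant term there vanishes when
`σ (-r) = 1 - σ r`, since then the integral of `σ` over `[-ρ, ρ]` is `ρ`.
-/

open MeasureTheory Set
open scoped ContDiff

section Calculus

variable {E : Type*} [NormedAddCommGroup E] [NormedSpace ℝ E]

theorem hasCompactSupport_deriv_of_eqOn_const {f : ℝ → E} {l u : ℝ} {b c : E}
    (hl : EqOn f (fun _ ↦ b) (Iic l)) (hu : EqOn f (fun _ ↦ c) (Ici u)) :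
    HasCompactSupport (deriv f) := by
  refine HasCompactSupport.intro (isCompact_Icc (a := l) (b := u)) fun x hx ↦ ?_
  rcases lt_or_ge x l with hxl | hlx
  · rw [(hl.eventuallyEq_of_mem (Iic_mem_nhds hxl)).deriv_eq, deriv_const]
  · have hux : u < x := not_le.mp fun hxu ↦ hx ⟨hlx, hxu⟩
    rw [(hu.eventuallyEq_of_mem (Ici_mem_nhds hux)).deriv_eq, deriv_const]

theorem integral_neg_self_of_map_neg_eq_const_sub [CompleteSpace E] {f : ℝ → E} {ρ : ℝ} {c : E}
    (hf : IntervalIntegrable f volume (-ρ) ρ) (hneg : ∀ t, f (-t) = c - f t) :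
    ∫ t in (-ρ)..ρ, f t = ρ • c := by
  have hreflect : (2 * ρ) • c - ∫ t in (-ρ)..ρ, f t = ∫ t in (-ρ)..ρ, f t :=
    calc (2 * ρ) • c - ∫ t in (-ρ)..ρ, f t = ∫ t in (-ρ)..ρ, (c - f t) := by
          rw [intervalIntegral.integral_sub intervalIntegrable_const hf,
            intervalIntegral.integral_const, sub_neg_eq_add, two_mul]
      _ = ∫ t in (-ρ)..ρ, f (-t) := by simp only [hneg]
      _ = ∫ t in (-ρ)..ρ, f t := by rw [intervalIntegral.integral_comp_neg, neg_neg]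
  have hdouble : (2 : ℝ) • ∫ t in (-ρ)..ρ, f t = (2 : ℝ) • ρ • c := by
    rw [smul_smul, sub_eq_iff_eq_add.mp hreflect, two_smul]
  exact smul_right_injective E two_ne_zero hdouble

end Calculus

section ExpComp

variable {g : ℝ → ℝ} {a α M r : ℝ}

theorem deriv_deriv_exp_comp (hg : Differentiable ℝ g) (hg' : DifferentiableAt ℝ (deriv g) r) :
    deriv (deriv fun r ↦ Real.exp (g r)) r =
      Real.exp (g r) * (deriv g r ^ 2 + deriv (deriv g) r) := by
  have hderiv : (deriv fun r ↦ Real.exp (g r)) = fun r ↦ Real.exp (g r) * deriv g r :=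
    funext fun r ↦ deriv_exp (hg r)
  rw [hderiv, deriv_fun_mul (hg r).exp hg', deriv_exp (hg r)]
  ring

theorem neg_deriv_exp_comp_div_mem_Icc (hg : DifferentiableAt ℝ g r)
    (hslope : deriv g r ∈ Icc (-a) (-α)) :
    -(deriv (fun r ↦ Real.exp (g r)) r) / Real.exp (g r) ∈ Icc α a := by
  rw [deriv_exp hg, ← mul_neg, mul_div_cancel_left₀ _ (Real.exp_ne_zero _)]
  exact ⟨le_neg_of_le_neg hslope.2, neg_le.mp hslope.1⟩

theorem deriv_deriv_exp_comp_div_mem_Icc (hα : 0 ≤ α) (hg : Differentiable ℝ g)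
    (hg' : DifferentiableAt ℝ (deriv g) r) (hslope : deriv g r ∈ Icc (-a) (-α))
    (hcurvature : deriv (deriv g) r ∈ Icc 0 M) :
    deriv (deriv fun r ↦ Real.exp (g r)) r / Real.exp (g r) ∈ Icc (α ^ 2) (a ^ 2 + M) := by
  have hlower : α ≤ -deriv g r := le_neg_of_le_neg hslope.2
  have hupper : -deriv g r ≤ a := neg_le.mp hslope.1
  rw [deriv_deriv_exp_comp hg hg', mul_div_cancel_left₀ _ (Real.exp_ne_zero _),
    ← neg_sq (deriv g r)]
  exact ⟨le_add_of_le_of_nonneg (pow_le_pow_left₀ hα hlower 2) hcurvature.1,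
    add_le_add (pow_le_pow_left₀ (hα.trans hlower) hupper 2) hcurvature.2⟩

end ExpComp

section Interpolation

variable {ρ r : ℝ}

theorem smoothTransition_one_sub (x : ℝ) :
    Real.smoothTransition (1 - x) = 1 - Real.smoothTransition x := by
  have hdenom : expNegInvGlue x + expNegInvGlue (1 - x) ≠ 0 :=
    (Real.smoothTransition.pos_denom x).ne'
  simp only [Real.smoothTransition, sub_sub_cancel]
  rw [one_sub_div hdenom, add_sub_cancel_left, add_comm]

/-- A smooth step, rising for `0 < ρ` from `0` on `(-∞, -ρ]` to `1` on `[ρ, ∞)`; it is the slope of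
`smoothRamp`. The affine change of variable makes its graph symmetric about `(0, 1 / 2)`. -/
noncomputable def symmetricStep (ρ r : ℝ) : ℝ :=
  Real.smoothTransition ((r / ρ + 1) / 2)

theorem symmetricStep_nonneg (ρ r : ℝ) : 0 ≤ symmetricStep ρ r :=
  Real.smoothTransition.nonneg _

theorem symmetricStep_le_one (ρ r : ℝ) : symmetricStep ρ r ≤ 1 :=
  Real.smoothTransition.le_one _

theorem symmetricStep_neg (ρ r : ℝ) : symmetricStep ρ (-r) = 1 - symmetricStep ρ r := by
  rw [symmetricStep, symmetricStep, ← smoothTransition_one_sub]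
  congr 1
  ring

theorem symmetricStep_eq_zero (hρ : 0 < ρ) (hr : r ≤ -ρ) : symmetricStep ρ r = 0 := by
  have hdiv : r / ρ ≤ -1 := by rwa [div_le_iff₀ hρ, neg_one_mul]
  exact Real.smoothTransition.zero_of_nonpos (by linarith)

theorem symmetricStep_eq_one (hρ : 0 < ρ) (hr : ρ ≤ r) : symmetricStep ρ r = 1 := by
  have hdiv : 1 ≤ r / ρ := (one_le_div₀ hρ).mpr hr
  exact Real.smoothTransition.one_of_one_le (by linarith)

theorem symmetricStep_monotone (hρ : 0 ≤ ρ) : Monotone (symmetricStep ρ) := by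
  intro x y hxy
  apply Real.smoothTransition.monotone
  gcongr

theorem contDiff_symmetricStep (ρ : ℝ) : ContDiff ℝ ∞ (symmetricStep ρ) :=
  Real.smoothTransition.contDiff.comp (by fun_prop)

theorem exists_deriv_symmetricStep_le (hρ : 0 < ρ) : ∃ M, ∀ r, deriv (symmetricStep ρ) r ≤ M := by
  have hsupp : HasCompactSupport (deriv (symmetricStep ρ)) :=
    hasCompactSupport_deriv_of_eqOn_const (fun _ ↦ symmetricStep_eq_zero hρ)
      fun _ ↦ symmetricStep_eq_one hρ
  have hcont : Continuous (deriv (symmetricStep ρ)) :=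
    (contDiff_symmetricStep ρ).continuous_deriv (by simp)
  obtain ⟨M, hM⟩ := hsupp.exists_bound_of_continuous hcont
  exact ⟨M, fun r ↦ (Real.le_norm_self _).trans (hM r)⟩

theorem intervalIntegrable_symmetricStep (ρ a b : ℝ) :
    IntervalIntegrable (symmetricStep ρ) volume a b :=
  (contDiff_symmetricStep ρ).continuous.intervalIntegrable a b

/-- A smooth convex regularization of `max r 0`, equal to it for `ρ ≤ |r|` when `0 < ρ`; it bends
one linear function into another. -/
noncomputable def smoothRamp (ρ r : ℝ) : ℝ :=
  ∫ t in (-ρ)..r, symmetricStep ρ t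

theorem hasDerivAt_smoothRamp (ρ r : ℝ) : HasDerivAt (smoothRamp ρ) (symmetricStep ρ r) r :=
  ((contDiff_symmetricStep ρ).continuous.integral_hasStrictDerivAt _ _).hasDerivAt

theorem contDiff_smoothRamp (ρ : ℝ) : ContDiff ℝ ∞ (smoothRamp ρ) := by
  rw [contDiff_infty_iff_deriv, funext fun r ↦ (hasDerivAt_smoothRamp ρ r).deriv]
  exact ⟨fun r ↦ (hasDerivAt_smoothRamp ρ r).differentiableAt, contDiff_symmetricStep ρ⟩

theorem smoothRamp_eq_zero (hρ : 0 < ρ) (hr : r ≤ -ρ) : smoothRamp ρ r = 0 := by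
  refine intervalIntegral.integral_zero_ae (.of_forall fun t ht ↦ ?_)
  rw [uIoc_of_ge hr] at ht
  exact symmetricStep_eq_zero hρ ht.2

theorem smoothRamp_eq_self (hρ : 0 < ρ) (hr : ρ ≤ r) : smoothRamp ρ r = r := by
  have hmiddle : ∫ t in (-ρ)..ρ, symmetricStep ρ t = ρ := by
    rw [integral_neg_self_of_map_neg_eq_const_sub (intervalIntegrable_symmetricStep ρ _ _)
      (symmetricStep_neg ρ), smul_eq_mul, mul_one]
  have hright : ∫ t in ρ..r, symmetricStep ρ t = r - ρ := by
    rw [intervalIntegral.integral_congr (g := fun _ ↦ 1), integral_one]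
    intro t ht
    rw [uIcc_of_le hr] at ht
    exact symmetricStep_eq_one hρ ht.1
  rw [smoothRamp, ← intervalIntegral.integral_add_adjacent_intervals
    (intervalIntegrable_symmetricStep ρ _ _) (intervalIntegrable_symmetricStep ρ _ _),
    hmiddle, hright, add_sub_cancel]

theorem exists_contDiff_convex_interpolating_linear {p q : ℝ} (hpq : p ≤ q) (hρ : 0 < ρ) :
    ∃ (g : ℝ → ℝ) (M : ℝ), ContDiff ℝ ∞ g ∧ (∀ r, deriv g r ∈ Icc p q) ∧
      (∀ r, deriv (deriv g) r ∈ Icc 0 M) ∧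
      (∀ r ≤ -ρ, g r = p * r) ∧ (∀ r, ρ ≤ r → g r = q * r) := by
  obtain ⟨M, hM⟩ := exists_deriv_symmetricStep_le hρ
  have hd : 0 ≤ q - p := sub_nonneg.mpr hpq
  have hsmooth := contDiff_smoothRamp ρ
  let g : ℝ → ℝ := fun r ↦ p * r + (q - p) * smoothRamp ρ r
  have hg : deriv g = fun r ↦ p + (q - p) * symmetricStep ρ r := funext fun r ↦
    ((hasDerivAt_const_mul p).add ((hasDerivAt_smoothRamp ρ r).const_mul (q - p))).deriv
  have hg' (r : ℝ) : deriv (deriv g) r = (q - p) * deriv (symmetricStep ρ) r := by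
    rw [hg, deriv_const_add, deriv_const_mul_field]
  refine ⟨g, (q - p) * M, by fun_prop, fun r ↦ ?_, fun r ↦ ?_, fun r hr ↦ ?_, fun r hr ↦ ?_⟩
  · rw [hg]
    have hle := mul_le_of_le_one_right hd (symmetricStep_le_one ρ r)
    exact ⟨le_add_of_nonneg_right (mul_nonneg hd (symmetricStep_nonneg ρ r)), by linarith⟩
  · rw [hg']
    exact ⟨mul_nonneg hd (symmetricStep_monotone hρ.le).deriv_nonneg,
      mul_le_mul_of_nonneg_left (hM r) hd⟩
  · simp only [g, smoothRamp_eq_zero hρ hr, mul_zero, add_zero]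
  · simp only [g, smoothRamp_eq_self hρ hr, ← add_mul, add_sub_cancel]

end Interpolation

theorem exists_interpolating_warping_function_general {a α ρ : ℝ} (hα : 0 < α) (hαa : α ≤ a)
    (hρ : 0 < ρ) :
    ∃ h : ℝ → ℝ, ContDiff ℝ ∞ h ∧ (∀ r, 0 < h r) ∧
      StrictAnti h ∧ StrictConvexOn ℝ univ h ∧
      (∀ r, deriv h r < 0) ∧ (∀ r, 0 < deriv (deriv h) r) ∧
      (∀ r, ρ ≤ r → h r = Real.exp (-α * r)) ∧
      (∀ r, r ≤ -ρ → h r = Real.exp (-a * r)) ∧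
      ∃ c₁ c₂ : ℝ, 0 < c₁ ∧ ∀ r,
        c₁ ≤ -(deriv h r) / h r ∧ -(deriv h r) / h r ≤ c₂ ∧
        c₁ ≤ deriv (deriv h) r / h r ∧ deriv (deriv h) r / h r ≤ c₂ := by
  obtain ⟨g, M, hg, hslope, hcurvature, hleft, hright⟩ :=
    exists_contDiff_convex_interpolating_linear (neg_le_neg hαa) hρ
  let h : ℝ → ℝ := fun r ↦ Real.exp (g r)
  have hpos (r : ℝ) : 0 < h r := Real.exp_pos _
  have hsmooth : ContDiff ℝ ∞ h := hg.exp
  have hdiff : Differentiable ℝ g := hg.differentiable (by simp)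
  have hdiff' : Differentiable ℝ (deriv g) :=
    (contDiff_infty_iff_deriv.mp hg).2.differentiable (by simp)
  have hratio (r : ℝ) : -(deriv h r) / h r ∈ Icc α a :=
    neg_deriv_exp_comp_div_mem_Icc (hdiff r) (hslope r)
  have hratio' (r : ℝ) : deriv (deriv h) r / h r ∈ Icc (α ^ 2) (a ^ 2 + M) :=
    deriv_deriv_exp_comp_div_mem_Icc hα.le hdiff (hdiff' r) (hslope r) (hcurvature r)
  have hderiv (r : ℝ) : deriv h r < 0 :=
    neg_pos.mp ((div_pos_iff_of_pos_right (hpos r)).mp (hα.trans_le (hratio r).1))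
  have hderiv' (r : ℝ) : 0 < deriv (deriv h) r :=
    (div_pos_iff_of_pos_right (hpos r)).mp ((pow_pos hα 2).trans_le (hratio' r).1)
  exact ⟨h, hsmooth, hpos, strictAnti_of_deriv_neg hderiv,
    strictConvexOn_univ_of_deriv2_pos hsmooth.continuous hderiv', hderiv, hderiv',
    fun r hr ↦ congrArg Real.exp (hright r hr), fun r hr ↦ congrArg Real.exp (hleft r hr),
    min α (α ^ 2), max a (a ^ 2 + M), lt_min hα (pow_pos hα 2), fun r ↦
      ⟨min_le_of_left_le (hratio r).1, le_max_of_le_left (hratio r).2,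
        min_le_of_right_le (hratio' r).1, le_max_of_le_right (hratio' r).2⟩⟩

/-- For `a = k ≥ α_i = i` (with `1 ≤ i ≤ k`) and any `ρ > 0`, there is
a positive smooth strictly convex strictly decreasing function `h : ℝ → ℝ` equal to
`e^{-i r}` for `r ≥ ρ` and to `e^{-k r}` for `r ≤ -ρ`, with `h' < 0 < h''` everywhere
and with `-h'/h` and `h''/h` uniformly bounded away from `0` and `∞`. -/
theorem exists_interpolating_warping_function (k : ℕ) (hk : 0 < k)
    (ρ : ℝ) (hρ : 0 < ρ) (i : ℕ) (hi1 : 1 ≤ i) (hik : i ≤ k) :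
    ∃ h : ℝ → ℝ, ContDiff ℝ (⊤ : ℕ∞) h ∧ (∀ r, 0 < h r) ∧
      StrictAnti h ∧ StrictConvexOn ℝ Set.univ h ∧
      (∀ r, deriv h r < 0) ∧ (∀ r, 0 < deriv (deriv h) r) ∧
      (∀ r, ρ ≤ r → h r = Real.exp (-(i : ℝ) * r)) ∧
      (∀ r, r ≤ -ρ → h r = Real.exp (-(k : ℝ) * r)) ∧
      ∃ c₁ c₂ : ℝ, 0 < c₁ ∧ ∀ r,
        c₁ ≤ -(deriv h r) / h r ∧ -(deriv h r) / h r ≤ c₂ ∧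
        c₁ ≤ deriv (deriv h) r / h r ∧ deriv (deriv h) r / h r ≤ c₂ := by
  exact exists_interpolating_warping_function_general (Nat.cast_pos.mpr hi1)
    (Nat.cast_le.mpr hik) hρ
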